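/- arXiv:2011.01286 — 4 statements merged into one kernel-verified Lean document; each statement's English description precedes it below -/
import Mathlib

section
/- A (2,2,2) probability table P is classical if and only if P is a convex combination of finitely many probability tables that are each deterministic and non-signalling; that is, there exist finitely many deterministic non-signalling probability tables P_1, ..., P_n and weights p_1, ..., p_n ≥ 0 with Σ_i p_i = 1 such that P = Σ_i p_i P_i. -/
/-!
Fix a value of the hidden variable. Each party then uses a conditional distribution, which is a
point of a product of simplices. The vertices of that product are the deterministic responses,
and forming the product table is bilinear, so the product table is a convex combination of products
of deterministic responses; averaging over the hidden variable preserves this. Conversely, the joint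
distribution of the outcomes of a deterministic table is, for each pair of inputs, a point mass,
hence the product of its marginals. If the table is also non-signalling, each marginal depends only
on the input of its own party, so the index of the convex combination can serve as hidden variable.
-/

/-- A (2,2,2) probability table: inputs `x y : Bool`, outcomes `a b : Bool`
(`true` denotes `+1`, `false` denotes `-1`), with nonnegative entries that sum to one
for every choice of inputs. -/
def IsProbTable (P : Bool → Bool → Bool → Bool → ℝ) : Prop :=
  (∀ a b x y, 0 ≤ P a b x y) ∧ ∀ x y, ∑ a : Bool, ∑ b : Bool, P a b x y = 1

/-- A probability table is classical if it admits a local hidden-variable model. -/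
def IsClassical (P : Bool → Bool → Bool → Bool → ℝ) : Prop :=
  ∃ (n : ℕ), 0 < n ∧
    ∃ (q : Fin n → ℝ) (PA : Bool → Bool → Fin n → ℝ) (PB : Bool → Bool → Fin n → ℝ),
      (∀ l, 0 ≤ q l) ∧ (∑ l, q l) = 1 ∧
      (∀ a x l, 0 ≤ PA a x l) ∧ (∀ x l, ∑ a : Bool, PA a x l = 1) ∧
      (∀ b y l, 0 ≤ PB b y l) ∧ (∀ y l, ∑ b : Bool, PB b y l = 1) ∧
      (∀ a b x y, P a b x y = ∑ l, q l * PA a x l * PB b y l)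

/-- A probability table is deterministic if every entry is 0 or 1. -/
def IsDeterministic (P : Bool → Bool → Bool → Bool → ℝ) : Prop :=
  ∀ a b x y, P a b x y = 0 ∨ P a b x y = 1

/-- A probability table is non-signalling if Alice's marginal does not depend on Bob's
input and vice versa. -/
def IsNonSignalling (P : Bool → Bool → Bool → Bool → ℝ) : Prop :=
  (∀ a x y y', ∑ b : Bool, P a b x y = ∑ b : Bool, P a b x y') ∧
  (∀ b y x x', ∑ a : Bool, P a b x y = ∑ a : Bool, P a b x' y)

section Convexity

theorem map₂_mem_convexHull_image2 {R E F G : Type*} [CommSemiring R] [PartialOrder R]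
    [AddCommMonoid E] [Module R E] [AddCommMonoid F] [Module R F] [AddCommMonoid G] [Module R G]
    (f : E →ₗ[R] F →ₗ[R] G) {s : Set E} {t : Set F} {x : E} {y : F}
    (hx : x ∈ convexHull R s) (hy : y ∈ convexHull R t) :
    f x y ∈ convexHull R (Set.image2 (fun x y ↦ f x y) s t) := by
  have hC := convex_convexHull R (Set.image2 (fun x y ↦ f x y) s t)
  have mem_of_mem_left : ∀ x' ∈ s, f x' y ∈ convexHull R (Set.image2 (fun x y ↦ f x y) s t) := by
    intro x' hx'
    refine convexHull_min (fun y' hy' ↦ ?_) (hC.linear_preimage (f x')) hy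
    exact subset_convexHull R _ ⟨x', hx', y', hy', rfl⟩
  exact convexHull_min mem_of_mem_left (hC.linear_preimage (f.flip y)) hx

variable {𝕜 : Type*} [Field 𝕜] [LinearOrder 𝕜] [IsStrictOrderedRing 𝕜]

theorem exists_fin_of_mem_convexHull {E : Type*} [AddCommGroup E] [Module 𝕜 E] {s : Set E} {x : E}
    (hx : x ∈ convexHull 𝕜 s) :
    ∃ n : ℕ, 0 < n ∧ ∃ (w : Fin n → 𝕜) (z : Fin n → E),
      (∀ i, 0 ≤ w i) ∧ ∑ i, w i = 1 ∧ (∀ i, z i ∈ s) ∧ ∑ i, w i • z i = x := by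
  obtain ⟨ι, _, w, z, hw₀, hw₁, hz, hx⟩ := mem_convexHull_iff_exists_fintype.mp hx
  have : Nonempty ι := by
    by_contra! h
    simp at hw₁
  let e := (Fintype.equivFin ι).symm
  exact ⟨Fintype.card ι, Fintype.card_pos, w ∘ e, z ∘ e, fun i ↦ hw₀ (e i),
    (e.sum_comp w).trans hw₁, fun i ↦ hz (e i), (e.sum_comp fun i ↦ w i • z i).trans hx⟩

theorem mem_convexHull_pi_range_single {ι κ : Type*} [Finite ι] [Fintype κ] [DecidableEq κ]
    {f : ι → κ → 𝕜} (hf : ∀ i, f i ∈ stdSimplex 𝕜 κ) :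
    f ∈ convexHull 𝕜 (Set.univ.pi fun _ : ι ↦ Set.range fun k : κ ↦ Pi.single k (1 : 𝕜)) := by
  simpa [convexHull_rangle_single_eq_stdSimplex] using hf

end Convexity

section PointMass

variable {R : Type*} [NonAssocSemiring R] [CharZero R]

theorem exists_eq_single_of_sum_eq_one {ι : Type*} [Fintype ι] [DecidableEq ι] {w : ι → R}
    (hw₀₁ : ∀ i, w i = 0 ∨ w i = 1) (hw : ∑ i, w i = 1) : ∃ i, w = Pi.single i 1 := by
  classical
  have w_eq_ite (i : ι) : w i = if w i = 1 then 1 else 0 := by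
    rcases hw₀₁ i with h | h <;> simp [h]
  have card_eq_one : (Finset.univ.filter fun i ↦ w i = 1).card = 1 := by
    rw [Finset.sum_congr rfl fun i _ ↦ w_eq_ite i, Finset.sum_boole] at hw
    exact_mod_cast hw
  obtain ⟨i, hi⟩ := Finset.card_eq_one.mp card_eq_one
  refine ⟨i, funext fun j ↦ ?_⟩
  have hj : w j = 1 ↔ j = i := by simpa using Finset.ext_iff.mp hi j
  rw [w_eq_ite, Pi.single_apply]
  simp only [hj]

theorem eq_sum_mul_sum_of_zero_or_one {α β : Type*} [Fintype α] [Fintype β] {w : α → β → R}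
    (hw₀₁ : ∀ a b, w a b = 0 ∨ w a b = 1) (hw : ∑ a, ∑ b, w a b = 1) (a : α) (b : β) :
    w a b = (∑ b', w a b') * ∑ a', w a' b := by
  classical
  obtain ⟨⟨a₀, b₀⟩, h⟩ := exists_eq_single_of_sum_eq_one (w := fun p : α × β ↦ w p.1 p.2)
    (fun p ↦ hw₀₁ p.1 p.2) (by rwa [Fintype.sum_prod_type])
  have w_eq (a b) : w a b = if a = a₀ ∧ b = b₀ then 1 else 0 := by
    simpa [Pi.single_apply] using congrFun h (a, b)
  by_cases ha : a = a₀ <;> simp [w_eq, ite_and, ha]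

end PointMass

section Tables

variable {𝕜 A B X Y : Type*} [Field 𝕜]

/-- The table of two parties responding independently, where `f x` and `g y` are the distributions
of their outcomes on inputs `x` and `y`. It is bundled as a bilinear map. -/
def productTable : (X → A → 𝕜) →ₗ[𝕜] (Y → B → 𝕜) →ₗ[𝕜] (A → B → X → Y → 𝕜) :=
  LinearMap.mk₂ 𝕜 (fun f g a b x y ↦ f x a * g y b)
    (fun _ _ _ ↦ by ext; simp [add_mul]) (fun _ _ _ ↦ by ext; simp [mul_assoc])
    (fun _ _ _ ↦ by ext; simp [mul_add]) (fun _ _ _ ↦ by ext; simp [mul_left_comm])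

@[simp]
theorem productTable_apply (f : X → A → 𝕜) (g : Y → B → 𝕜) (a : A) (b : B) (x : X) (y : Y) :
    productTable f g a b x y = f x a * g y b :=
  rfl

/-- `IsDeterministic` for arbitrary outcome and input sets, with entries in a field. -/
def IsDeterministicTable (P : A → B → X → Y → 𝕜) : Prop :=
  ∀ a b x y, P a b x y = 0 ∨ P a b x y = 1

theorem isDeterministicTable_productTable {f : X → A → 𝕜} {g : Y → B → 𝕜}
    (hf : ∀ x a, f x a = 0 ∨ f x a = 1) (hg : ∀ y b, g y b = 0 ∨ g y b = 1) :
    IsDeterministicTable (productTable f g) := by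
  intro a b x y
  rcases hf x a with h | h <;> simp [h, hg y b]

variable [Fintype A] [Fintype B]

/-- `IsNonSignalling` for finite outcome sets and arbitrary input sets, with entries in a field. -/
def IsNonSignallingTable (P : A → B → X → Y → 𝕜) : Prop :=
  (∀ a x y y', ∑ b, P a b x y = ∑ b, P a b x y') ∧
  (∀ b y x x', ∑ a, P a b x y = ∑ a, P a b x' y)

theorem isNonSignallingTable_productTable {f : X → A → 𝕜} {g : Y → B → 𝕜}
    (hf : ∀ x, ∑ a, f x a = 1) (hg : ∀ y, ∑ b, g y b = 1) :
    IsNonSignallingTable (productTable f g) := by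
  constructor <;> intros <;> simp [← Finset.mul_sum, ← Finset.sum_mul, hf, hg]

variable [LinearOrder 𝕜]

/-- `IsProbTable` for finite outcome sets and arbitrary input sets, with entries in an ordered
field. -/
def IsProbabilityTable (P : A → B → X → Y → 𝕜) : Prop :=
  (∀ a b x y, 0 ≤ P a b x y) ∧ ∀ x y, ∑ a, ∑ b, P a b x y = 1

/-- `IsClassical` for finite outcome sets and arbitrary input sets, with entries in an ordered
field: a local hidden-variable model whose hidden variable ranges over `Fin n`. -/
def HasLocalModel (P : A → B → X → Y → 𝕜) : Prop :=
  ∃ (n : ℕ), 0 < n ∧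
    ∃ (q : Fin n → 𝕜) (PA : A → X → Fin n → 𝕜) (PB : B → Y → Fin n → 𝕜),
      (∀ l, 0 ≤ q l) ∧ (∑ l, q l) = 1 ∧
      (∀ a x l, 0 ≤ PA a x l) ∧ (∀ x l, ∑ a, PA a x l = 1) ∧
      (∀ b y l, 0 ≤ PB b y l) ∧ (∀ y l, ∑ b, PB b y l = 1) ∧
      (∀ a b x y, P a b x y = ∑ l, q l * PA a x l * PB b y l)

variable [IsStrictOrderedRing 𝕜]

theorem isProbabilityTable_productTable {f : X → A → 𝕜} {g : Y → B → 𝕜}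
    (hf : ∀ x, f x ∈ stdSimplex 𝕜 A) (hg : ∀ y, g y ∈ stdSimplex 𝕜 B) :
    IsProbabilityTable (productTable f g) :=
  ⟨fun a b x y ↦ mul_nonneg ((hf x).1 a) ((hg y).1 b), fun x y ↦ by
    simp [← Finset.mul_sum, (hf x).2, (hg y).2]⟩

theorem productTable_mem_convexHull [Finite X] [Finite Y] {f : X → A → 𝕜} {g : Y → B → 𝕜}
    (hf : ∀ x, f x ∈ stdSimplex 𝕜 A) (hg : ∀ y, g y ∈ stdSimplex 𝕜 B) :
    productTable f g ∈ convexHull 𝕜 {Q : A → B → X → Y → 𝕜 |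
      IsProbabilityTable Q ∧ IsDeterministicTable Q ∧ IsNonSignallingTable Q} := by
  classical
  have hfg := map₂_mem_convexHull_image2 (productTable (𝕜 := 𝕜) (A := A) (B := B))
    (mem_convexHull_pi_range_single hf) (mem_convexHull_pi_range_single hg)
  refine convexHull_mono ?_ hfg
  rintro _ ⟨r, hr, s, hs, rfl⟩
  choose α hα using fun x ↦ hr x (Set.mem_univ x)
  choose β hβ using fun y ↦ hs y (Set.mem_univ y)
  obtain rfl : (fun x ↦ Pi.single (α x) 1) = r := funext hα
  obtain rfl : (fun y ↦ Pi.single (β y) 1) = s := funext hβ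
  have hα_simplex (x : X) := single_mem_stdSimplex 𝕜 (α x)
  have hβ_simplex (y : Y) := single_mem_stdSimplex 𝕜 (β y)
  exact ⟨isProbabilityTable_productTable hα_simplex hβ_simplex,
    isDeterministicTable_productTable
      (fun _ _ ↦ by simp [Pi.single_apply, em']) (fun _ _ ↦ by simp [Pi.single_apply, em']),
    isNonSignallingTable_productTable (fun x ↦ (hα_simplex x).2) (fun y ↦ (hβ_simplex y).2)⟩

theorem HasLocalModel.mem_convexHull [Finite X] [Finite Y] {P : A → B → X → Y → 𝕜}
    (hP : HasLocalModel P) :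
    P ∈ convexHull 𝕜 {Q : A → B → X → Y → 𝕜 |
      IsProbabilityTable Q ∧ IsDeterministicTable Q ∧ IsNonSignallingTable Q} := by
  obtain ⟨n, -, q, PA, PB, hq₀, hq₁, hA₀, hA₁, hB₀, hB₁, hP⟩ := hP
  have P_eq : P = ∑ l, q l • productTable (fun x a ↦ PA a x l) (fun y b ↦ PB b y l) := by
    ext a b x y
    simp [hP, Finset.sum_apply, mul_assoc]
  rw [P_eq]
  exact (convex_convexHull 𝕜 _).sum_mem (fun l _ ↦ hq₀ l) hq₁ fun l _ ↦
    productTable_mem_convexHull (fun x ↦ ⟨fun a ↦ hA₀ a x l, hA₁ x l⟩)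
      (fun y ↦ ⟨fun b ↦ hB₀ b y l, hB₁ y l⟩)

theorem exists_eq_productTable [Nonempty X] [Nonempty Y] {Q : A → B → X → Y → 𝕜}
    (hQ : IsProbabilityTable Q) (hdet : IsDeterministicTable Q) (hns : IsNonSignallingTable Q) :
    ∃ (f : X → A → 𝕜) (g : Y → B → 𝕜),
      (∀ x, f x ∈ stdSimplex 𝕜 A) ∧ (∀ y, g y ∈ stdSimplex 𝕜 B) ∧ Q = productTable f g := by
  obtain ⟨x₀⟩ := ‹Nonempty X›
  obtain ⟨y₀⟩ := ‹Nonempty Y›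
  refine ⟨fun x a ↦ ∑ b, Q a b x y₀, fun y b ↦ ∑ a, Q a b x₀ y,
    fun x ↦ ⟨fun a ↦ Finset.sum_nonneg fun b _ ↦ hQ.1 a b x y₀, hQ.2 x y₀⟩,
    fun y ↦ ⟨fun b ↦ Finset.sum_nonneg fun a _ ↦ hQ.1 a b x₀ y, ?_⟩, ?_⟩
  · rw [Finset.sum_comm]
    exact hQ.2 x₀ y
  · ext a b x y
    rw [productTable_apply, hns.1 a x y₀ y, hns.2 b y x₀ x]
    exact eq_sum_mul_sum_of_zero_or_one (fun a b ↦ hdet a b x y) (hQ.2 x y) a b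

theorem classical_iff_convex_combination_of_deterministic_nonsignalling_general
    [Finite X] [Finite Y] [Nonempty X] [Nonempty Y] (P : A → B → X → Y → 𝕜) :
    HasLocalModel P ↔
      ∃ (n : ℕ), 0 < n ∧
        ∃ (p : Fin n → 𝕜) (Q : Fin n → A → B → X → Y → 𝕜),
          (∀ i, 0 ≤ p i) ∧ (∑ i, p i) = 1 ∧
          (∀ i, IsProbabilityTable (Q i) ∧ IsDeterministicTable (Q i) ∧
            IsNonSignallingTable (Q i)) ∧
          (∀ a b x y, P a b x y = ∑ i, p i * Q i a b x y) := by
  constructor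
  · intro hP
    obtain ⟨n, hn, p, Q, hp₀, hp₁, hQ, rfl⟩ := exists_fin_of_mem_convexHull hP.mem_convexHull
    exact ⟨n, hn, p, Q, hp₀, hp₁, hQ, fun a b x y ↦ by simp [Finset.sum_apply]⟩
  · rintro ⟨n, hn, p, Q, hp₀, hp₁, hQ, hP⟩
    choose f g hf hg hfg using fun i ↦ exists_eq_productTable (hQ i).1 (hQ i).2.1 (hQ i).2.2
    exact ⟨n, hn, p, fun a x i ↦ f i x a, fun b y i ↦ g i y b, hp₀, hp₁,
      fun a x i ↦ (hf i x).1 a, fun x i ↦ (hf i x).2,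
      fun b y i ↦ (hg i y).1 b, fun y i ↦ (hg i y).2,
      fun a b x y ↦ by simp [hP, hfg, mul_assoc]⟩

end Tables

/-- A (2,2,2) probability table is classical if and only if it is a finite
convex combination of deterministic non-signalling probability tables. -/
theorem classical_iff_convex_combination_of_deterministic_nonsignalling
    (P : Bool → Bool → Bool → Bool → ℝ) (hP : IsProbTable P) :
    IsClassical P ↔
      ∃ (n : ℕ), 0 < n ∧
        ∃ (p : Fin n → ℝ) (Q : Fin n → Bool → Bool → Bool → Bool → ℝ),
          (∀ i, 0 ≤ p i) ∧ (∑ i, p i) = 1 ∧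
          (∀ i, IsProbTable (Q i) ∧ IsDeterministic (Q i) ∧ IsNonSignalling (Q i)) ∧
          (∀ a b x y, P a b x y = ∑ i, p i * Q i a b x y) :=
  classical_iff_convex_combination_of_deterministic_nonsignalling_general P
end

section
/- The Tsirelson bound: for every quantum (2,2,2) probability table P, the CHSH value satisfies E(P) ≤ 2√2. -/
open Kronecker
open scoped ComplexOrder

/-- The outcome value: `true` denotes `+1`, `false` denotes `-1`. -/
noncomputable def sgn (a : Bool) : ℝ := if a then 1 else -1

/-- A probability table is quantum if it arises from local POVM measurements on a
bipartite quantum state. -/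
def IsQuantum (P : Bool → Bool → Bool → Bool → ℝ) : Prop :=
  ∃ (dA dB : ℕ), 1 ≤ dA ∧ 1 ≤ dB ∧
    ∃ (ρ : Matrix (Fin dA × Fin dB) (Fin dA × Fin dB) ℂ)
      (E : Bool → Bool → Matrix (Fin dA) (Fin dA) ℂ)
      (F : Bool → Bool → Matrix (Fin dB) (Fin dB) ℂ),
      ρ.PosSemidef ∧ ρ.trace = 1 ∧
      (∀ x a, (E x a).PosSemidef) ∧ (∀ x, E x false + E x true = 1) ∧
      (∀ y b, (F y b).PosSemidef) ∧ (∀ y, F y false + F y true = 1) ∧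
      (∀ a b x y, (P a b x y : ℂ) = (ρ * (E x a ⊗ₖ F y b)).trace)

/-- The correlator `E_{x,y}(P) = ∑_{a,b} a·b·P(a,b|x,y)`. -/
noncomputable def correlator (P : Bool → Bool → Bool → Bool → ℝ) (x y : Bool) : ℝ :=
  ∑ a : Bool, ∑ b : Bool, sgn a * sgn b * P a b x y

/-- The CHSH value `E(P) = E_{0,0} + E_{0,1} + E_{1,0} − E_{1,1}`. -/
noncomputable def chsh (P : Bool → Bool → Bool → Bool → ℝ) : ℝ :=
  correlator P false false + correlator P false true +
    correlator P true false - correlator P true true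

/-!
The differences `A x = E x true - E x false` and `B y = F y true - F y false` of the effects are
self-adjoint contractions, and Alice's commute with Bob's, so with `S` the CHSH operator

  `(A₀ + A₁ - √2 B₀)² + (A₀ - A₁ - √2 B₁)² = 2 (A₀² + A₁² + B₀² + B₁²) - 2√2 S ≤ 8 - 2√2 S`.

The left side is nonnegative, whence `S ≤ 2√2` as operators; a state preserves this inequality.
-/

section Observables

variable {R : Type*} [Ring R]

/-- The CHSH operator of Alice's observables `A` and Bob's observables `B`, indexed by the inputs
and with the signs of `chsh`. -/
def chshOperator (A B : Bool → R) : R :=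
  A false * B false + A false * B true + A true * B false - A true * B true

/-- The `±1`-valued observable of a measurement with effects `E`, where as in `sgn` the outcome
`true` has value `+1`. -/
def observable (E : Bool → R) : R :=
  E true - E false

/-- A two-outcome positive operator-valued measure in an ordered ring. -/
structure IsBinaryPOVM [PartialOrder R] (E : Bool → R) : Prop where
  nonneg : ∀ a, 0 ≤ E a
  add_eq_one : E false + E true = 1

theorem commute_observable {E F : Bool → R} (h : ∀ a b, Commute (E a) (F b)) :
    Commute (observable E) (observable F) :=
  ((h _ _).sub_right (h _ _)).sub_left ((h _ _).sub_right (h _ _))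

namespace IsBinaryPOVM

variable [PartialOrder R] [StarRing R] [StarOrderedRing R] {E : Bool → R}

theorem isSelfAdjoint_observable (hE : IsBinaryPOVM E) : IsSelfAdjoint (observable E) :=
  (IsSelfAdjoint.of_nonneg (hE.nonneg _)).sub (IsSelfAdjoint.of_nonneg (hE.nonneg _))

theorem observable_sq_le_one (hE : IsBinaryPOVM E) : observable E ^ 2 ≤ 1 := by
  -- The effects sum to one, so they commute and `1 - (E₁ - E₀)² = 4 E₀ E₁`; writing
  -- `E₀ E₁ = E₀ E₁ (E₀ + E₁)` exhibits this as a sum of conjugates of positive elements.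
  have one_sub_sq : 1 - observable E ^ 2 =
      4 • (E false * E true * E false + E true * E false * E true) := by
    rw [observable, eq_sub_of_add_eq' hE.add_eq_one]
    noncomm_ring
  rw [← sub_nonneg, one_sub_sq]
  exact nsmul_nonneg
    (add_nonneg (conjugate_nonneg_of_nonneg (hE.nonneg true) (hE.nonneg false))
      (conjugate_nonneg_of_nonneg (hE.nonneg false) (hE.nonneg true))) 4

end IsBinaryPOVM

end Observables

section OperatorInequality

variable {R : Type*} [Ring R] [Algebra ℝ R] {A B : Bool → R}

theorem sq_add_sq_eq_sub_smul_chshOperator (hAB : ∀ x y, Commute (A x) (B y)) :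
    (A false + A true - √2 • B false) ^ 2 + (A false - A true - √2 • B true) ^ 2 =
      (2 : ℝ) • (A false ^ 2 + A true ^ 2 + B false ^ 2 + B true ^ 2) -
        (2 * √2) • chshOperator A B := by
  have sqrt_two_mul_self : √2 * √2 = 2 := Real.mul_self_sqrt zero_le_two
  simp only [chshOperator, sq, add_mul, sub_mul, mul_add, mul_sub, smul_mul_assoc, mul_smul_comm,
    smul_add, smul_sub, ← (hAB _ _).eq, smul_smul, sqrt_two_mul_self]
  module

theorem chshOperator_le_of_sq_le_one [PartialOrder R] [StarRing R] [StarOrderedRing R]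
    [StarModule ℝ R] [IsOrderedModule ℝ R]
    (hA : ∀ x, IsSelfAdjoint (A x)) (hB : ∀ y, IsSelfAdjoint (B y))
    (hA_sq : ∀ x, A x ^ 2 ≤ 1) (hB_sq : ∀ y, B y ^ 2 ≤ 1)
    (hAB : ∀ x y, Commute (A x) (B y)) :
    chshOperator A B ≤ (2 * √2) • (1 : R) := by
  have sqrt_two_sa : IsSelfAdjoint √2 := .all _
  have sum_sq_nonneg :
      0 ≤ (A false + A true - √2 • B false) ^ 2 + (A false - A true - √2 • B true) ^ 2 :=
    add_nonneg (((hA _).add (hA _)).sub (sqrt_two_sa.smul (hB _))).sq_nonneg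
      (((hA _).sub (hA _)).sub (sqrt_two_sa.smul (hB _))).sq_nonneg
  rw [sq_add_sq_eq_sub_smul_chshOperator hAB, sub_nonneg] at sum_sq_nonneg
  refine le_of_smul_le_smul_left (a := 2 * √2) ?_ (by positivity)
  calc (2 * √2) • chshOperator A B
      ≤ (2 : ℝ) • (A false ^ 2 + A true ^ 2 + B false ^ 2 + B true ^ 2) := sum_sq_nonneg
    _ ≤ (2 : ℝ) • (1 + 1 + 1 + 1) := by gcongr <;> apply_rules
    _ = (2 * √2) • (2 * √2) • (1 : R) := by
      rw [smul_smul, mul_mul_mul_comm, Real.mul_self_sqrt zero_le_two]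
      module

end OperatorInequality

section CommutingModels

/-- `P` arises from a state on the ordered real algebra `R` and two families of measurements
in `R` that commute with each other. This is the commuting-operator model of quantum
correlations, in which no tensor product is present. -/
def IsCommutingQuantum (R : Type*) [Ring R] [Algebra ℝ R] [PartialOrder R]
    (P : Bool → Bool → Bool → Bool → ℝ) : Prop :=
  ∃ (φ : R →ₚ[ℝ] ℝ) (E F : Bool → Bool → R), φ 1 = 1 ∧
    (∀ x, IsBinaryPOVM (E x)) ∧ (∀ y, IsBinaryPOVM (F y)) ∧
    (∀ x y a b, Commute (E x a) (F y b)) ∧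
    ∀ a b x y, P a b x y = φ (E x a * F y b)

variable {R : Type*} [Ring R] [Algebra ℝ R] {P : Bool → Bool → Bool → Bool → ℝ}

theorem correlator_eq_map_observable_mul (φ : R →ₗ[ℝ] ℝ) {E F : Bool → Bool → R}
    (hP : ∀ a b x y, P a b x y = φ (E x a * F y b)) (x y : Bool) :
    correlator P x y = φ (observable (E x) * observable (F y)) := by
  simp only [correlator, observable, sgn, Fintype.sum_bool, hP, sub_mul, mul_sub, map_sub,
    if_true, Bool.false_eq_true, if_false]
  ring

theorem chsh_eq_map_chshOperator (φ : R →ₗ[ℝ] ℝ) {E F : Bool → Bool → R}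
    (hP : ∀ a b x y, P a b x y = φ (E x a * F y b)) :
    chsh P = φ (chshOperator (fun x ↦ observable (E x)) fun y ↦ observable (F y)) := by
  simp only [chsh, chshOperator, correlator_eq_map_observable_mul φ hP, map_add, map_sub]

theorem tsirelson_bound_general [PartialOrder R] [StarRing R] [StarOrderedRing R]
    [StarModule ℝ R] [IsOrderedModule ℝ R] (hP : IsCommutingQuantum R P) :
    chsh P ≤ 2 * √2 := by
  obtain ⟨φ, E, F, φ_one, hE, hF, hEF, hP⟩ := hP
  calc chsh P = φ (chshOperator (fun x ↦ observable (E x)) fun y ↦ observable (F y)) :=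
        chsh_eq_map_chshOperator φ.toLinearMap hP
    _ ≤ φ ((2 * √2) • (1 : R)) := OrderHomClass.mono φ <|
        chshOperator_le_of_sq_le_one
          (fun x ↦ (hE x).isSelfAdjoint_observable) (fun y ↦ (hF y).isSelfAdjoint_observable)
          (fun x ↦ (hE x).observable_sq_le_one) (fun y ↦ (hF y).observable_sq_le_one)
          fun x y ↦ commute_observable (hEF x y)
    _ = 2 * √2 := by rw [map_smul, φ_one, smul_eq_mul, mul_one]

end CommutingModels

section Kronecker

variable {α m n : Type*} [CommSemiring α] [Fintype m] [Fintype n] [DecidableEq m] [DecidableEq n]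

theorem kronecker_one_mul_one_kronecker (A : Matrix m m α) (B : Matrix n n α) :
    A ⊗ₖ (1 : Matrix n n α) * (1 : Matrix m m α) ⊗ₖ B = A ⊗ₖ B := by
  rw [← Matrix.mul_kronecker_mul, mul_one, one_mul]

theorem commute_kronecker_one_one_kronecker (A : Matrix m m α) (B : Matrix n n α) :
    Commute (A ⊗ₖ (1 : Matrix n n α)) ((1 : Matrix m m α) ⊗ₖ B) := by
  rw [Commute, SemiconjBy, ← Matrix.mul_kronecker_mul, ← Matrix.mul_kronecker_mul]
  simp only [mul_one, one_mul]

end Kronecker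

section TensorModels

open scoped MatrixOrder

variable {𝕜 m n : Type*} [RCLike 𝕜] [Fintype m] [Fintype n]

theorem trace_mul_nonneg_of_posSemidef {A B : Matrix n n 𝕜} (hA : A.PosSemidef)
    (hB : B.PosSemidef) : 0 ≤ (A * B).trace := by
  classical
  obtain ⟨C, rfl⟩ := CStarAlgebra.nonneg_iff_eq_star_mul_self.mp hB.nonneg
  rw [← mul_assoc, Matrix.trace_mul_comm, ← mul_assoc]
  exact (hA.mul_mul_conjTranspose_same C).trace_nonneg

/-- The positive functional `M ↦ Re tr(ρ M)` given by a positive semidefinite matrix `ρ`. It is a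
state when `ρ` has trace one. -/
noncomputable def traceFunctional {ρ : Matrix n n 𝕜} (hρ : ρ.PosSemidef) : Matrix n n 𝕜 →ₚ[ℝ] ℝ :=
  .mk₀ (RCLike.reLm ∘ₗ Matrix.traceLinearMap n ℝ 𝕜 ∘ₗ LinearMap.mulLeft ℝ ρ) fun _ hM ↦
    (RCLike.nonneg_iff.mp
      (trace_mul_nonneg_of_posSemidef hρ (Matrix.nonneg_iff_posSemidef.mp hM))).1

theorem traceFunctional_apply {ρ : Matrix n n 𝕜} (hρ : ρ.PosSemidef) (M : Matrix n n 𝕜) :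
    traceFunctional hρ M = RCLike.re (ρ * M).trace :=
  rfl

variable [DecidableEq m] [DecidableEq n]

theorem IsBinaryPOVM.kronecker_one {E : Bool → Matrix m m 𝕜} (hE : IsBinaryPOVM E) :
    IsBinaryPOVM fun a ↦ E a ⊗ₖ (1 : Matrix n n 𝕜) where
  nonneg a := ((Matrix.nonneg_iff_posSemidef.mp (hE.nonneg a)).kronecker .one).nonneg
  add_eq_one := by rw [← Matrix.add_kronecker, hE.add_eq_one, Matrix.one_kronecker_one]

theorem IsBinaryPOVM.one_kronecker {F : Bool → Matrix n n 𝕜} (hF : IsBinaryPOVM F) :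
    IsBinaryPOVM fun b ↦ (1 : Matrix m m 𝕜) ⊗ₖ F b where
  nonneg b :=
    (Matrix.PosSemidef.one.kronecker (Matrix.nonneg_iff_posSemidef.mp (hF.nonneg b))).nonneg
  add_eq_one := by rw [← Matrix.kronecker_add, hF.add_eq_one, Matrix.one_kronecker_one]

theorem IsQuantum.exists_isCommutingQuantum {P : Bool → Bool → Bool → Bool → ℝ}
    (hP : IsQuantum P) :
    ∃ dA dB : ℕ, IsCommutingQuantum (Matrix (Fin dA × Fin dB) (Fin dA × Fin dB) ℂ) P := by
  obtain ⟨dA, dB, -, -, ρ, E, F, hρ, ρ_trace, E_pos, E_sum, F_pos, F_sum, hP⟩ := hP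
  refine ⟨dA, dB, traceFunctional hρ, fun x a ↦ E x a ⊗ₖ 1, fun y b ↦ 1 ⊗ₖ F y b, ?_,
    fun x ↦ .kronecker_one ⟨fun a ↦ (E_pos x a).nonneg, E_sum x⟩,
    fun y ↦ .one_kronecker ⟨fun b ↦ (F_pos y b).nonneg, F_sum y⟩,
    fun x y a b ↦ commute_kronecker_one_one_kronecker (E x a) (F y b), fun a b x y ↦ ?_⟩
  · rw [traceFunctional_apply, mul_one, ρ_trace, RCLike.one_re]
  · rw [traceFunctional_apply, kronecker_one_mul_one_kronecker, ← hP]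
    exact (Complex.ofReal_re _).symm

end TensorModels

/-- the Tsirelson bound `E(P) ≤ 2√2` for quantum tables. -/
theorem tsirelson_bound
    (P : Bool → Bool → Bool → Bool → ℝ) (hP : IsProbTable P)
    (hQ : IsQuantum P) : chsh P ≤ 2 * Real.sqrt 2 := by
  obtain ⟨_, _, hC⟩ := hQ.exists_isCommutingQuantum
  open scoped MatrixOrder in
  exact tsirelson_bound_general hC
end

section
/- The PR box is not quantum: the (2,2,2) probability table P^PR, defined by P^PR(a,b|x,y) = 1/2 if a·b = (−1)^{x·y} and P^PR(a,b|x,y) = 0 otherwise, is not a quantum probability table. -/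
open Kronecker
open scoped ComplexOrder

/-- The PR box: `P(a,b|x,y) = 1/2` if `a·b = (−1)^{x·y}` and `0` otherwise. -/
noncomputable def PRbox (a b x y : Bool) : ℝ :=
  if sgn a * sgn b = (if x && y then (-1 : ℝ) else 1) then 1 / 2 else 0

/-!
If positive semidefinite `ρ` and `M` satisfy `tr (ρ M) = 0`, then already `ρ M = 0`. Hence each
vanishing probability `P(a,b|x,y)` gives `ρ (E_x^a ⊗ F_y^b) = 0`, and a perfect correlation between
the outcomes of `E_x` and `F_y` turns into `ρ (E_x^a ⊗ 1) = ρ (1 ⊗ F_y^b)`. Following the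
correlations of the PR box around the cycle `E₁, F₀, E₀, F₁, E₁`, the last of which is reversed,
gives `ρ (E₁^a ⊗ 1) = ρ (E₁^{-a} ⊗ 1)`. One of `ρ (E₁^{±1} ⊗ F₁^b)` is zero, so both are, and
summing over all outcomes gives `ρ = 0`, against `tr ρ = 1`.
-/

section Matrix

open scoped MatrixOrder
open Matrix

theorem trace_mul_eq_zero_iff_of_posSemidef {n 𝕜 : Type*} [Fintype n] [RCLike 𝕜]
    {A B : Matrix n n 𝕜} (hA : A.PosSemidef) (hB : B.PosSemidef) :
    (A * B).trace = 0 ↔ A * B = 0 := by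
  classical
  refine ⟨fun h ↦ ?_, fun h ↦ by rw [h, trace_zero]⟩
  obtain ⟨C, rfl⟩ : ∃ C, A = Cᴴ * C := CStarAlgebra.nonneg_iff_eq_star_mul_self.mp hA.nonneg
  obtain ⟨D, rfl⟩ : ∃ D, B = D * Dᴴ := CStarAlgebra.nonneg_iff_eq_mul_star_self.mp hB.nonneg
  have hCD : C * D = 0 := by
    rw [← trace_conjTranspose_mul_self_eq_zero_iff, ← h, conjTranspose_mul, Matrix.mul_assoc,
      trace_mul_comm Dᴴ]
    simp only [Matrix.mul_assoc]
  calc Cᴴ * C * (D * Dᴴ) = Cᴴ * (C * D) * Dᴴ := by simp only [Matrix.mul_assoc]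
    _ = 0 := by rw [hCD, Matrix.mul_zero, Matrix.zero_mul]

end Matrix

section PerfectCorrelation

variable {R : Type*} [Semiring R] {ρ : R}

theorem mul_eq_mul_of_perfectly_correlated {ι κ : Type*} [Fintype ι] [Fintype κ]
    {e : ι → R} {f : κ → R} (he : ∑ i, e i = 1) (hf : ∑ j, f j = 1) {i : ι} {j : κ}
    (hi : ∀ i' ≠ i, ρ * (e i' * f j) = 0) (hj : ∀ j' ≠ j, ρ * (e i * f j') = 0) :
    ρ * e i = ρ * f j :=
  calc ρ * e i = ∑ j', ρ * (e i * f j') := by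
        rw [← Finset.mul_sum, ← Finset.mul_sum, hf, mul_one]
    _ = ρ * (e i * f j) := Fintype.sum_eq_single j hj
    _ = ∑ i', ρ * (e i' * f j) := (Fintype.sum_eq_single i hi).symm
    _ = ρ * f j := by rw [← Finset.mul_sum, ← Finset.sum_mul, he, one_mul]

theorem eq_zero_of_forall_xor_ne_and {e f : Bool → Bool → R}
    (he : ∀ x, ∑ a, e x a = 1) (hf : ∀ y, ∑ b, f y b = 1)
    (h : ∀ a b x y, (a ^^ b) ≠ (x && y) → ρ * (e x a * f y b) = 0) : ρ = 0 := by
  have correlated {a b x y} (hab : (a ^^ b) = (x && y)) : ρ * e x a = ρ * f y b :=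
    mul_eq_mul_of_perfectly_correlated (he x) (hf y)
      (fun a' ha' ↦ h a' b x y (by rwa [← hab, Ne, Bool.xor_left_inj]))
      (fun b' hb' ↦ h a b' x y (by rwa [← hab, Ne, Bool.xor_right_inj]))
  have flip (a : Bool) : ρ * e true a = ρ * e true !a :=
    calc ρ * e true a = ρ * f false a := correlated (by simp)
      _ = ρ * e false a := (correlated (by simp)).symm
      _ = ρ * f true a := correlated (by simp)
      _ = ρ * e true !a := (correlated (by simp)).symm
  have joint_eq_zero (a b : Bool) : ρ * (e true a * f true b) = 0 := by
    obtain rfl | rfl := Bool.eq_or_eq_not a b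
    · exact h a a true true (by simp)
    · rw [← mul_assoc, ← flip, mul_assoc]
      exact h b b true true (by simp)
  calc ρ = ρ * ((∑ a, e true a) * ∑ b, f true b) := by rw [he, hf, mul_one, mul_one]
    _ = ∑ a, ∑ b, ρ * (e true a * f true b) := by
        rw [Finset.sum_mul_sum, Finset.mul_sum]
        simp only [Finset.mul_sum]
    _ = 0 := by simp only [joint_eq_zero, Finset.sum_const_zero]

end PerfectCorrelation

theorem PRbox_eq_ite_xor (a b x y : Bool) :
    PRbox a b x y = if (a ^^ b) = (x && y) then 1 / 2 else 0 := by
  cases a <;> cases b <;> cases x <;> cases y <;> norm_num [PRbox, sgn]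

theorem prbox_not_quantum_general {P : Bool → Bool → Bool → Bool → ℝ}
    (hP : ∀ a b x y, (a ^^ b) ≠ (x && y) → P a b x y = 0) : ¬ IsQuantum P := by
  rintro ⟨dA, dB, -, -, ρ, E, F, hρ, htr, hE, hE1, hF, hF1, hPρ⟩
  have joint_eq_zero (a b x y) (h : (a ^^ b) ≠ (x && y)) : ρ * (E x a ⊗ₖ F y b) = 0 := by
    rw [← trace_mul_eq_zero_iff_of_posSemidef hρ ((hE x a).kronecker (hF y b)), ← hPρ,
      hP a b x y h, Complex.ofReal_zero]
  have hρ0 : ρ = 0 := by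
    refine eq_zero_of_forall_xor_ne_and (e := fun x a ↦ E x a ⊗ₖ 1) (f := fun y b ↦ 1 ⊗ₖ F y b)
      (fun x ↦ ?_) (fun y ↦ ?_) (fun a b x y h ↦ ?_)
    · rw [Fintype.sum_bool, add_comm, ← Matrix.add_kronecker, hE1, Matrix.one_kronecker_one]
    · rw [Fintype.sum_bool, add_comm, ← Matrix.kronecker_add, hF1, Matrix.one_kronecker_one]
    · rw [← Matrix.mul_kronecker_mul, mul_one, one_mul, joint_eq_zero a b x y h]
  rw [hρ0, Matrix.trace_zero] at htr
  exact zero_ne_one htr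

/-- the PR box is not a quantum probability table. -/
theorem prbox_not_quantum : ¬ IsQuantum PRbox :=
  prbox_not_quantum_general fun a b x y h ↦ by rw [PRbox_eq_ite_xor, if_neg h]
end

section
/- Quantum theory has no third-order interference: let ρ be an N×N complex density matrix, Q an N×N Hermitian matrix with 0 ≤ Q ≤ 𝟙 (i.e. Q and 𝟙−Q positive semidefinite), and π_1, π_2, π_3 pairwise orthogonal projections (π_i² = π_i = π_i†, π_i π_j = 0 for i ≠ j). For a nonempty subset I ⊆ {1,2,3}, set π_I := Σ_{i∈I} π_i and P_I := tr(π_I ρ π_I Q). Then P_{123} = P_{12} + P_{13} + P_{23} − P_1 − P_2 − P_3. -/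
open scoped ComplexOrder

/-- The probability `P_I = tr(π_I ρ π_I Q)` of the detector click when (only) the
slits in `I ⊆ {1,2,3}` are open, where `π_I = Σ_{i∈I} π_i`. -/
noncomputable def slitProb {N : ℕ} (ρ Q : Matrix (Fin N) (Fin N) ℂ)
    (π : Fin 3 → Matrix (Fin N) (Fin N) ℂ) (I : Finset (Fin 3)) : ℂ :=
  ((∑ i ∈ I, π i) * ρ * (∑ i ∈ I, π i) * Q).trace

/-!
For fixed `ρ` and `Q` the probability `tr(π ρ π Q)` is a quadratic form in the operator `π`. Since
`π_I` is additive in the set `I` of open slits, interference of order `k` is a `k`-th finite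
difference of this quadratic form, and the third differences of a quadratic form vanish.
-/

/-- The detector response `X ↦ tr(X ρ X Q)` as a quadratic form in the operator `X` by which the
slits act. The underlying product is bracketed as `(X ρ) (X Q)`, a product of two linear maps. -/
def responseForm {R n : Type*} [CommSemiring R] [Fintype n]
    (ρ Q : Matrix n n R) : QuadraticForm R (Matrix n n R) :=
  (Matrix.traceLinearMap n R R).compQuadraticMap
    (QuadraticMap.linMulLin (LinearMap.mulRight R ρ) (LinearMap.mulRight R Q))

lemma responseForm_apply {R n : Type*} [CommSemiring R] [Fintype n]
    (ρ Q X : Matrix n n R) : responseForm ρ Q X = (X * ρ * X * Q).trace :=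
  congrArg Matrix.trace (mul_assoc (X * ρ) X Q).symm

lemma slitProb_eq_responseForm {N : ℕ} (ρ Q : Matrix (Fin N) (Fin N) ℂ)
    (π : Fin 3 → Matrix (Fin N) (Fin N) ℂ) (I : Finset (Fin 3)) :
    slitProb ρ Q π I = responseForm ρ Q (∑ i ∈ I, π i) :=
  (responseForm_apply ρ Q _).symm

theorem no_third_order_interference_general {R M V ι : Type*} [CommSemiring R]
    [AddCommMonoid M] [Module R M] [AddCommGroup V] [Module R V] [DecidableEq ι]
    (P : QuadraticMap R M V) (π : ι → M) {i j k : ι} (hij : i ≠ j) (hik : i ≠ k) (hjk : j ≠ k) :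
    P (∑ l ∈ {i, j, k}, π l) =
      P (∑ l ∈ {i, j}, π l) + P (∑ l ∈ {i, k}, π l) + P (∑ l ∈ {j, k}, π l)
        - P (∑ l ∈ {i}, π l) - P (∑ l ∈ {j}, π l) - P (∑ l ∈ {k}, π l) := by
  have sum_triple : ∑ l ∈ {i, j, k}, π l = π i + π j + π k := by
    rw [Finset.sum_insert (by simp [hij, hik]), Finset.sum_pair hjk, add_assoc]
  have third_difference : P (π i + π j + π k) + (P (π i) + P (π j) + P (π k)) =
      P (π i + π j) + P (π i + π k) + P (π j + π k) := by
    rw [P.map_add_add_add_map, add_comm (π k), add_right_comm]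
  rw [sum_triple, Finset.sum_pair hij, Finset.sum_pair hik, Finset.sum_pair hjk]
  simp only [Finset.sum_singleton]
  rw [sub_sub, sub_sub, ← add_assoc, eq_sub_iff_add_eq, third_difference]

/-- quantum theory has no third-order interference: for a density
matrix `ρ`, an effect `0 ≤ Q ≤ 𝟙`, and pairwise orthogonal projections
`π_1, π_2, π_3`, we have `P_{123} = P_{12} + P_{13} + P_{23} − P_1 − P_2 − P_3`. -/
theorem no_third_order_interference {N : ℕ}
    (ρ Q : Matrix (Fin N) (Fin N) ℂ) (π : Fin 3 → Matrix (Fin N) (Fin N) ℂ)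
    (hρ : ρ.PosSemidef) (hρtr : ρ.trace = 1)
    (hQ : Q.PosSemidef) (hQ1 : (1 - Q).PosSemidef)
    (hproj : ∀ i, (π i).IsHermitian ∧ π i * π i = π i)
    (horth : ∀ i j, i ≠ j → π i * π j = 0) :
    slitProb ρ Q π {0, 1, 2} =
      slitProb ρ Q π {0, 1} + slitProb ρ Q π {0, 2} + slitProb ρ Q π {1, 2}
        - slitProb ρ Q π {0} - slitProb ρ Q π {1} - slitProb ρ Q π {2} := by
  simp only [slitProb_eq_responseForm]
  exact no_third_order_interference_general (responseForm ρ Q) π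
    (by decide) (by decide) (by decide)
end
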